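/- Let f : ℂ → ℂ be a transcendental entire function and let x ∈ ℂ be such that f(x) = x and f⁻¹({x}) = {x} (x is the only preimage of x under f). Then the set of fixed points {z ∈ ℂ : f(z) = z} of f is infinite. -/

import Mathlib

open Complex Metric Set Filter Topology Polynomial
open scoped Real

/-!
A holomorphic function on a disc omitting `0` and `1` can be written `-exp (π i cosh g)`, where
`cosh g` is never an odd integer. The preimages of the odd integers under `cosh` are relatively
dense in the plane, so Bloch's theorem bounds `g'`; integrating gives Schottky's theorem. If `f`
omits `0` and `1` near an isolated singularity and is not large there, Schottky's theorem bounds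
it on a sequence of shrinking circles, hence near the point by the maximum principle. So the
singularity is not essential (great Picard theorem).

If an entire `f` meets two distinct polynomials `p` and `q` only finitely often, apply this at
infinity to `(f - p) / (q - p)`: then `f` has at most a pole at infinity, so it is a polynomial.
The theorem is the case of the constant polynomial `x` and the identity.
-/

section Branches

variable {U : Set ℂ} {f : ℂ → ℂ} {c : ℂ}

theorem exists_differentiableOn_log (hUc : IsSimplyConnected U) (hUo : IsOpen U)
    (hf : DifferentiableOn ℂ f U) (h0 : ∀ z ∈ U, f z ≠ 0) (hc : c ∈ U) :
    ∃ L : ℂ → ℂ, DifferentiableOn ℂ L U ∧ (∀ z ∈ U, exp (L z) = f z) ∧ L c = log (f c) := by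
  obtain ⟨l, hl, hexp⟩ := exists_continuousOn_eqOn_exp_comp hUc hUo hf.continuousOn
    (by rintro ⟨z, hz, h⟩; exact h0 z hz h)
  have hld (z) (hz : z ∈ U) : DifferentiableAt ℂ l z := by
    have hfz := (hf.differentiableAt (hUo.mem_nhds hz)).hasFDerivAt
    refine (HasFDerivAt.of_comp_of_leftInverse (hl.continuousAt (hUo.mem_nhds hz))
      (hasDerivAt_exp (l z)).hasFDerivAt hfz (hexp.eventuallyEq_of_mem (hUo.mem_nhds hz))
      (f'symm := ContinuousLinearMap.toSpanSingleton ℂ (exp (-l z))) fun w ↦ ?_).differentiableAt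
    simp [mul_assoc, ← exp_add]
  have hshift : exp (log (f c) - l c) = 1 := by
    rw [exp_sub, exp_log (h0 c hc), ← hexp hc]
    exact div_self (exp_ne_zero _)
  refine ⟨fun z ↦ l z + (log (f c) - l c), fun z hz ↦
    ((hld z hz).add_const _).differentiableWithinAt, fun z hz ↦ ?_, by ring⟩
  rw [exp_add, hshift, mul_one]
  exact hexp hz

theorem exists_differentiableOn_pow_eq (hUc : IsSimplyConnected U) (hUo : IsOpen U)
    (hf : DifferentiableOn ℂ f U) (h0 : ∀ z ∈ U, f z ≠ 0) {n : ℕ} (hn : n ≠ 0) :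
    ∃ s : ℂ → ℂ, DifferentiableOn ℂ s U ∧ ∀ z ∈ U, s z ^ n = f z := by
  obtain ⟨c, hc⟩ := hUc.nonempty
  obtain ⟨L, hLd, hL, -⟩ := exists_differentiableOn_log hUc hUo hf h0 hc
  refine ⟨fun z ↦ exp (L z / n), (hLd.div_const _).cexp, fun z hz ↦ ?_⟩
  rw [← exp_nat_mul, mul_div_cancel₀ _ (Nat.cast_ne_zero.2 hn), hL z hz]

theorem norm_log_le_abs_log_norm_add_pi (z : ℂ) : ‖log z‖ ≤ |Real.log ‖z‖| + π := by
  grw [norm_le_abs_re_add_abs_im, log_re, log_im, abs_arg_le_pi]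

theorem exists_differentiableOn_cosh_eq (hUc : IsSimplyConnected U) (hUo : IsOpen U)
    (hf : DifferentiableOn ℂ f U) (h1 : ∀ z ∈ U, f z ≠ 1) (h2 : ∀ z ∈ U, f z ≠ -1) (hc : c ∈ U) :
    ∃ g : ℂ → ℂ, DifferentiableOn ℂ g U ∧ (∀ z ∈ U, cosh (g z) = f z) ∧
      ‖g c‖ ≤ Real.log (2 * ‖f c‖ + 1) + π := by
  obtain ⟨s, hsd, hs⟩ := exists_differentiableOn_pow_eq hUc hUo ((hf.fun_pow 2).sub_const 1)
    (fun z hz ↦ sub_ne_zero.2 (sq_ne_one_iff.2 ⟨h1 z hz, h2 z hz⟩)) two_ne_zero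
  -- If `cosh w = f`, then `exp w` is a root of `X ^ 2 - 2 f X + 1`, namely `f ± s`.
  have hmul (z) (hz : z ∈ U) : (f z + s z) * (f z - s z) = 1 := by
    linear_combination -hs z hz
  obtain ⟨g, hgd, hg, hgc⟩ := exists_differentiableOn_log hUc hUo (hf.fun_add hsd)
    (fun z hz ↦ left_ne_zero_of_mul_eq_one (hmul z hz)) hc
  refine ⟨g, hgd, fun z hz ↦ ?_, ?_⟩
  · rw [cosh, exp_neg, hg z hz, inv_eq_of_mul_eq_one_right (hmul z hz)]
    ring
  · have hsc : ‖s c‖ ≤ ‖f c‖ + 1 := by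
      refine le_of_sq_le_sq ?_ (by positivity)
      calc ‖s c‖ ^ 2 = ‖f c ^ 2 - 1‖ := by rw [← norm_pow, hs c hc]
        _ ≤ ‖f c‖ ^ 2 + 1 := (norm_sub_le _ _).trans_eq (by rw [norm_pow, norm_one])
        _ ≤ (‖f c‖ + 1) ^ 2 := by nlinarith [norm_nonneg (f c)]
    have hlog : |Real.log ‖f c + s c‖| ≤ Real.log (2 * ‖f c‖ + 1) := by
      have hpos : 0 < ‖f c + s c‖ := norm_pos_iff.2 (left_ne_zero_of_mul_eq_one (hmul c hc))
      refine abs_le'.2 ⟨Real.log_le_log hpos (by linarith [norm_add_le (f c) (s c)]), ?_⟩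
      rw [← Real.log_inv, ← norm_inv, inv_eq_of_mul_eq_one_right (hmul c hc)]
      exact Real.log_le_log (norm_pos_iff.2 (right_ne_zero_of_mul_eq_one (hmul c hc)))
        (by linarith [norm_sub_le (f c) (s c)])
    rw [hgc]
    grw [norm_log_le_abs_log_norm_add_pi, hlog]

theorem exists_differentiableOn_neg_exp_cosh_eq (hUc : IsSimplyConnected U) (hUo : IsOpen U)
    (hf : DifferentiableOn ℂ f U) (h0 : ∀ z ∈ U, f z ≠ 0) (h1 : ∀ z ∈ U, f z ≠ 1) (hc : c ∈ U) :
    ∃ g : ℂ → ℂ, DifferentiableOn ℂ g U ∧ (∀ z ∈ U, f z = -exp (π * I * cosh (g z))) ∧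
      ‖g c‖ ≤ Real.log (2 * |Real.log ‖f c‖| + 5) + π := by
  obtain ⟨L, hLd, hL, hLc⟩ := exists_differentiableOn_log hUc hUo hf h0 hc
  set h : ℂ → ℂ := fun z ↦ L z / (π * I) - 1 with hh
  have hpiI : (π * I : ℂ) ≠ 0 := by simp [Real.pi_ne_zero]
  have hfh (z) (hz : z ∈ U) : f z = -exp (π * I * h z) := by
    rw [← hL z hz, hh, mul_sub, mul_div_cancel₀ _ hpiI, mul_one, exp_sub, exp_pi_mul_I]
    ring
  have hhc : ‖h c‖ ≤ |Real.log ‖f c‖| + 2 := by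
    have hpi := Real.pi_gt_three
    have hlog := abs_nonneg (Real.log ‖f c‖)
    calc ‖h c‖ ≤ ‖log (f c)‖ / π + 1 := by
          simpa [hh, hLc, abs_of_pos Real.pi_pos] using norm_sub_le (L c / (π * I)) 1
      _ ≤ (|Real.log ‖f c‖| + π) / π + 1 := by
          grw [norm_log_le_abs_log_norm_add_pi]
      _ = |Real.log ‖f c‖| / π + 2 := by field_simp; ring
      _ ≤ |Real.log ‖f c‖| + 2 := by grw [div_le_self hlog (by linarith)]
  obtain ⟨g, hgd, hg, hgc⟩ := exists_differentiableOn_cosh_eq (f := h) hUc hUo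
    ((hLd.div_const _).sub_const 1)
    (fun z hz h' ↦ h1 z hz (by rw [hfh z hz, h', mul_one, exp_pi_mul_I, neg_neg]))
    (fun z hz h' ↦ h1 z hz (by rw [hfh z hz, h', mul_neg_one, exp_neg, exp_pi_mul_I]; norm_num)) hc
  refine ⟨g, hgd, fun z hz ↦ by rw [hg z hz, hfh z hz], hgc.trans ?_⟩
  have hlog : Real.log (2 * ‖h c‖ + 1) ≤ Real.log (2 * |Real.log ‖f c‖| + 5) :=
    Real.log_le_log (by positivity) (by linarith)
  linarith

end Branches

section OddValues

theorem three_mul_cosh_le_cosh_add_two {s : ℝ} (hs : 0 ≤ s) :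
    3 * Real.cosh s ≤ Real.cosh (s + 2) := by
  have hsinh : 1 ≤ Real.sinh 1 := Real.self_le_sinh_iff.2 zero_le_one
  have hcosh : (3 : ℝ) ≤ Real.cosh 2 := by
    calc (3 : ℝ) ≤ 2 * Real.sinh 1 ^ 2 + 1 := by nlinarith
      _ = Real.cosh (2 * 1) := by rw [Real.cosh_two_mul, Real.cosh_sq]; ring
      _ = Real.cosh 2 := by rw [mul_one]
  calc 3 * Real.cosh s ≤ Real.cosh s * Real.cosh 2 := by nlinarith [Real.cosh_pos s]
    _ ≤ Real.cosh s * Real.cosh 2 + Real.sinh s * Real.sinh 2 :=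
      le_add_of_nonneg_right (mul_nonneg (Real.sinh_nonneg_iff.2 hs)
        (Real.sinh_nonneg_iff.2 zero_le_two))
    _ = Real.cosh (s + 2) := (Real.cosh_add s 2).symm

theorem exists_real_cosh_eq_odd_near (s : ℝ) :
    ∃ t : ℝ, |t - s| ≤ 2 ∧ ∃ n : ℤ, Real.cosh t = 2 * n + 1 := by
  wlog hs : 0 ≤ s generalizing s
  · obtain ⟨t, ht, n, hn⟩ := this (-s) (by linarith)
    refine ⟨-t, ?_, n, by rwa [Real.cosh_neg]⟩
    rwa [← abs_neg, show -(-t - s) = t - -s by ring]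
  set n := ⌈(Real.cosh s - 1) / 2⌉
  have hle : Real.cosh s ≤ 2 * n + 1 := by linarith [Int.le_ceil ((Real.cosh s - 1) / 2)]
  have hlt : (2 * n + 1 : ℝ) ≤ Real.cosh (s + 2) := by
    have hstep := three_mul_cosh_le_cosh_add_two hs
    linarith [Int.ceil_lt_add_one ((Real.cosh s - 1) / 2), Real.one_le_cosh s]
  have hone : (1 : ℝ) ≤ 2 * n + 1 := (Real.one_le_cosh s).trans hle
  have hcosh := Real.cosh_arcosh hone
  have harcosh := Real.arcosh_nonneg hone
  rw [← hcosh, Real.cosh_le_cosh, abs_of_nonneg hs, abs_of_nonneg harcosh] at hle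
  rw [← hcosh, Real.cosh_le_cosh, abs_of_nonneg harcosh, abs_of_nonneg (by linarith)] at hlt
  exact ⟨Real.arcosh (2 * n + 1), abs_le.2 ⟨by linarith, by linarith⟩, n, hcosh⟩

theorem exists_cosh_eq_odd_mem_ball (w : ℂ) : ∃ p ∈ ball w 4, ∃ n : ℤ, cosh p = 2 * n + 1 := by
  obtain ⟨t, ht, n, hn⟩ := exists_real_cosh_eq_odd_near w.re
  set m := round (w.im / π)
  have hpi := Real.pi_pos
  have him : |m * π - w.im| ≤ π / 2 := by
    calc |m * π - w.im| = |w.im / π - m| * π := by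
          rw [abs_sub_comm, ← abs_of_pos hpi, ← abs_mul, abs_of_pos hpi]
          congr 1
          field_simp
      _ ≤ 1 / 2 * π := by grw [abs_sub_round]
      _ = π / 2 := by ring
  refine ⟨t + m * (π * I), ?_, ?_⟩
  · rw [mem_ball, dist_eq_norm]
    calc ‖t + m * (π * I) - w‖ ≤ |t - w.re| + |m * π - w.im| := by
          simpa using norm_le_abs_re_add_abs_im (t + m * (π * I) - w)
      _ ≤ 2 + π / 2 := by grw [ht, him]
      _ < 4 := by linarith [Real.pi_lt_four]
  · have hcosh : cosh t = 2 * n + 1 := by exact_mod_cast hn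
    rcases Int.even_or_odd m with hm | hm
    · exact ⟨n, by rw [cosh_antiperiodic.add_int_mul_eq, Int.negOnePow_even m hm, hcosh]; simp⟩
    · refine ⟨-n - 1, ?_⟩
      rw [cosh_antiperiodic.add_int_mul_eq, Int.negOnePow_odd m hm, hcosh]
      push_cast
      ring

end OddValues

section Bloch

variable {g : ℂ → ℂ} {c : ℂ} {r R : ℝ}

theorem norm_deriv_sub_le_of_norm_deriv_le {D : ℝ} (hg : DifferentiableOn ℂ g (ball c r))
    (hD : ∀ z ∈ ball c r, ‖deriv g z‖ ≤ D) {z : ℂ} (hz : z ∈ ball c r) :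
    ‖deriv g z - deriv g c‖ ≤ 2 * D / r * ‖z - c‖ := by
  have hc : c ∈ ball c r := mem_ball_self (pos_of_mem_ball hz)
  have hmaps : MapsTo (deriv g) (ball c r) (closedBall (deriv g c) (2 * D)) := fun y hy ↦ by
    rw [mem_closedBall, dist_eq_norm]
    linarith [norm_sub_le (deriv g y) (deriv g c), hD y hy, hD c hc]
  simpa only [dist_eq_norm] using
    dist_le_div_mul_dist_of_mapsTo_ball (hg.deriv isOpen_ball) hmaps hz

theorem mul_norm_sub_le_norm_image_sub {d : ℂ}
    (hg : ∀ z ∈ closedBall c r, DifferentiableAt ℂ g z)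
    (hd : ∀ z ∈ closedBall c r, ‖deriv g z - d‖ ≤ ‖d‖ / 2) {z : ℂ} (hz : z ∈ closedBall c r) :
    ‖d‖ / 2 * ‖z - c‖ ≤ ‖g z - g c‖ := by
  have hlin (y) (hy : y ∈ closedBall c r) :
      HasDerivWithinAt (fun y ↦ g y - d * y) (deriv g y - d) (closedBall c r) y :=
    ((hg y hy).hasDerivAt.sub (hasDerivAt_const_mul d)).hasDerivWithinAt
  have herr := (convex_closedBall c r).norm_image_sub_le_of_norm_hasDerivWithin_le hlin hd
    (mem_closedBall_self (nonneg_of_mem_closedBall hz)) hz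
  have htri := norm_sub_le (g z - g c) ((g z - d * z) - (g c - d * c))
  rw [show g z - g c - ((g z - d * z) - (g c - d * c)) = d * (z - c) by ring, norm_mul] at htri
  linarith

theorem ball_subset_image_ball_of_norm_deriv_le (hg : DifferentiableOn ℂ g (ball c r))
    (hle : ∀ z ∈ ball c r, ‖deriv g z‖ ≤ 2 * ‖deriv g c‖) :
    ball (g c) (‖deriv g c‖ * r / 32) ⊆ g '' ball c r := by
  obtain h | h := le_or_gt (‖deriv g c‖ * r) 0
  · simp [ball_eq_empty.2 (by linarith : ‖deriv g c‖ * r / 32 ≤ 0)]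
  have hD : 0 < ‖deriv g c‖ :=
    (norm_nonneg _).lt_of_ne' (left_ne_zero_of_mul h.ne')
  have hr : 0 < r := pos_of_mul_pos_right h hD.le
  have hsub : closedBall c (r / 8) ⊆ ball c r := closedBall_subset_ball (by linarith)
  have hdiff (z) (hz : z ∈ closedBall c (r / 8)) : DifferentiableAt ℂ g z :=
    hg.differentiableAt (isOpen_ball.mem_nhds (hsub hz))
  have hlow (z) (hz : z ∈ closedBall c (r / 8)) : ‖deriv g c‖ / 2 * ‖z - c‖ ≤ ‖g z - g c‖ := by
    refine mul_norm_sub_le_norm_image_sub hdiff (fun y hy ↦ ?_) hz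
    calc ‖deriv g y - deriv g c‖ ≤ 2 * (2 * ‖deriv g c‖) / r * ‖y - c‖ :=
          norm_deriv_sub_le_of_norm_deriv_le hg hle (hsub hy)
      _ ≤ 2 * (2 * ‖deriv g c‖) / r * (r / 8) := by grw [mem_closedBall_iff_norm.1 hy]
      _ = ‖deriv g c‖ / 2 := by field_simp; ring
  have hcont : DiffContOnCl ℂ g (ball c (r / 8)) := DifferentiableOn.diffContOnCl fun z hz ↦
    (hdiff z (closure_ball_subset_closedBall hz)).differentiableWithinAt
  have hne : ∃ᶠ z in 𝓝 c, g z ≠ g c := by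
    refine Eventually.frequently ?_ |>.filter_mono (nhdsWithin_le_nhds (s := {c}ᶜ))
    filter_upwards [self_mem_nhdsWithin,
      nhdsWithin_le_nhds (closedBall_mem_nhds c (by positivity : 0 < r / 8))] with z hzc hz h
    have hpos : 0 < ‖deriv g c‖ / 2 * ‖z - c‖ :=
      mul_pos (half_pos hD) (norm_pos_iff.2 (sub_ne_zero.2 hzc))
    exact hpos.not_ge (by simpa [h] using hlow z hz)
  have hcover := hcont.ball_subset_image_closedBall (ε := ‖deriv g c‖ * r / 16) (by positivity)
    (fun z hz ↦ by
      have h := hlow z (sphere_subset_closedBall hz)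
      rw [mem_sphere_iff_norm.1 hz] at h
      linarith) hne
  rw [show ‖deriv g c‖ * r / 32 = ‖deriv g c‖ * r / 16 / 2 by ring]
  exact hcover.trans (image_mono hsub)

/-- **Bloch's theorem**, with a non-optimal constant. -/
theorem exists_ball_subset_image_ball (hg : DifferentiableOn ℂ g (ball c R)) :
    ∃ b, ball b (‖deriv g c‖ * R / 128) ⊆ g '' ball c R := by
  obtain h | h := le_or_gt (‖deriv g c‖ * R) 0
  · exact ⟨0, by simp [ball_eq_empty.2 (by linarith : ‖deriv g c‖ * R / 128 ≤ 0)]⟩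
  have hR : 0 < R := pos_of_mul_pos_right h (norm_nonneg _)
  have hsub : closedBall c (R / 2) ⊆ ball c R := closedBall_subset_ball (by linarith)
  -- Around a maximum point of this function, the derivative at most doubles.
  have hcont : ContinuousOn (fun z ↦ ‖deriv g z‖ * (R / 2 - dist z c)) (closedBall c (R / 2)) :=
    ((hg.deriv isOpen_ball).continuousOn.mono hsub).norm.mul (by fun_prop)
  obtain ⟨a, -, hmax⟩ := (isCompact_closedBall c (R / 2)).exists_isMaxOn
    ⟨c, mem_closedBall_self (by positivity)⟩ hcont
  set t := R / 2 - dist a c with ht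
  have hac : ‖deriv g c‖ * R / 2 ≤ ‖deriv g a‖ * t := by
    simpa [mul_div_assoc] using hmax (mem_closedBall_self (by positivity : 0 ≤ R / 2))
  have htpos : 0 < t := pos_of_mul_pos_right (by linarith) (norm_nonneg (deriv g a))
  have hball : ball a (t / 2) ⊆ closedBall c (R / 2) :=
    (ball_subset_ball' (by linarith)).trans ball_subset_closedBall
  have hle (z) (hz : z ∈ ball a (t / 2)) : ‖deriv g z‖ ≤ 2 * ‖deriv g a‖ := by
    have hdist : t / 2 ≤ R / 2 - dist z c := by
      linarith [dist_triangle z a c, mem_ball.1 hz]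
    refine le_of_mul_le_mul_right ?_ (half_pos htpos)
    calc ‖deriv g z‖ * (t / 2) ≤ ‖deriv g z‖ * (R / 2 - dist z c) := by gcongr
      _ ≤ ‖deriv g a‖ * t := hmax (hball hz)
      _ = 2 * ‖deriv g a‖ * (t / 2) := by ring
  exact ⟨g a, (ball_subset_ball (by linarith)).trans
    ((ball_subset_image_ball_of_norm_deriv_le (hg.mono (hball.trans hsub)) hle).trans
      (image_mono (hball.trans hsub)))⟩

end Bloch

section Schottky

variable {f g : ℂ → ℂ} {c : ℂ} {r R : ℝ}

theorem norm_deriv_mul_le_of_cosh_ne_odd (hg : DifferentiableOn ℂ g (ball c R))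
    (hodd : ∀ z ∈ ball c R, ∀ n : ℤ, cosh (g z) ≠ 2 * n + 1) : ‖deriv g c‖ * R ≤ 512 := by
  by_contra! hlt
  obtain ⟨b, hb⟩ := exists_ball_subset_image_ball hg
  obtain ⟨p, hp, n, hn⟩ := exists_cosh_eq_odd_mem_ball b
  obtain ⟨z, hz, rfl⟩ := hb (ball_subset_ball (by linarith) hp)
  exact hodd z hz n hn

theorem norm_sub_le_of_cosh_ne_odd (hg : DifferentiableOn ℂ g (ball c R))
    (hodd : ∀ z ∈ ball c R, ∀ n : ℤ, cosh (g z) ≠ 2 * n + 1) (hrR : r < R) {z : ℂ}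
    (hz : z ∈ closedBall c r) : ‖g z - g c‖ ≤ 512 / (R - r) * r := by
  have hsub : closedBall c r ⊆ ball c R := closedBall_subset_ball hrR
  have hderiv (y) (hy : y ∈ closedBall c r) : ‖deriv g y‖ ≤ 512 / (R - r) := by
    have hy' : ball y (R - r) ⊆ ball c R := ball_subset_ball' (by linarith [mem_closedBall.1 hy])
    rw [le_div_iff₀ (sub_pos.2 hrR)]
    exact norm_deriv_mul_le_of_cosh_ne_odd (hg.mono hy') fun z hz ↦ hodd z (hy' hz)
  refine ((convex_closedBall c r).norm_image_sub_le_of_norm_deriv_le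
    (fun y hy ↦ hg.differentiableAt (isOpen_ball.mem_nhds (hsub hy))) hderiv
    (mem_closedBall_self (nonneg_of_mem_closedBall hz)) hz).trans ?_
  have := sub_pos.2 hrR
  grw [mem_closedBall_iff_norm.1 hz]

theorem norm_cosh_le_exp_norm (z : ℂ) : ‖cosh z‖ ≤ Real.exp ‖z‖ := by
  have h := norm_exp_le_exp_norm (-z)
  rw [norm_neg] at h
  rw [cosh, norm_div, Complex.norm_ofNat]
  linarith [norm_add_le (exp z) (exp (-z)), norm_exp_le_exp_norm z]

theorem isSimplyConnected_ball (hR : 0 < R) : IsSimplyConnected (ball c R) := by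
  have := contractibleSpace_ball (x := c) hR
  exact (inferInstance : SimplyConnectedSpace (ball c R))

theorem norm_le_exp_of_ne_zero_of_ne_one (hf : DifferentiableOn ℂ f (ball c R))
    (h0 : ∀ z ∈ ball c R, f z ≠ 0) (h1 : ∀ z ∈ ball c R, f z ≠ 1) (hrR : r < R) {z : ℂ}
    (hz : z ∈ closedBall c r) :
    ‖f z‖ ≤ Real.exp (π * Real.exp
      (Real.log (2 * |Real.log ‖f c‖| + 5) + π + 512 / (R - r) * r)) := by
  have hR : 0 < R := (nonneg_of_mem_closedBall hz).trans_lt hrR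
  obtain ⟨g, hgd, hg, hgc⟩ := exists_differentiableOn_neg_exp_cosh_eq (isSimplyConnected_ball hR)
    isOpen_ball hf h0 h1 (mem_ball_self hR)
  have hodd (y) (hy : y ∈ ball c R) (n : ℤ) : cosh (g y) ≠ 2 * n + 1 := fun h ↦ by
    refine h1 y hy ?_
    rw [hg y hy, h, mul_add, mul_one, exp_add, exp_pi_mul_I,
      show π * I * (2 * n) = n * (2 * π * I) by ring, exp_int_mul_two_pi_mul_I]
    norm_num
  have hsub := norm_sub_le_of_cosh_ne_odd hgd hodd hrR hz
  calc ‖f z‖ = ‖exp (π * I * cosh (g z))‖ := by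
        rw [hg z (closedBall_subset_ball hrR hz), norm_neg]
    _ ≤ Real.exp (π * ‖cosh (g z)‖) := by
        simpa [abs_of_pos Real.pi_pos] using norm_exp_le_exp_norm (π * I * cosh (g z))
    _ ≤ Real.exp (π * Real.exp ‖g z‖) := by grw [norm_cosh_le_exp_norm]
    _ ≤ _ := by
        gcongr
        linarith [norm_sub_norm_le (g z) (g c)]

theorem exists_norm_le_of_half_le_norm_center (hrR : r < R) (M : ℝ) :
    ∃ K : ℝ, ∀ (f : ℂ → ℂ) (c : ℂ), DifferentiableOn ℂ f (ball c R) →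
      (∀ z ∈ ball c R, f z ≠ 0) → (∀ z ∈ ball c R, f z ≠ 1) → 1 / 2 ≤ ‖f c‖ → ‖f c‖ ≤ M →
      ∀ z ∈ closedBall c r, ‖f z‖ ≤ K := by
  refine ⟨Real.exp (π * Real.exp
    (Real.log (2 * Real.log (M + 2) + 5) + π + 512 / (R - r) * r)),
    fun f c hf h0 h1 hfc hfM z hz ↦
    (norm_le_exp_of_ne_zero_of_ne_one hf h0 h1 hrR hz).trans ?_⟩
  have hlog : |Real.log ‖f c‖| ≤ Real.log (M + 2) := by
    refine abs_le'.2 ⟨Real.log_le_log (by linarith) (by linarith), ?_⟩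
    rw [← Real.log_inv]
    refine Real.log_le_log (inv_pos.2 (by linarith)) ?_
    grw [← hfc]
    linarith
  grw [hlog]

/-- **Schottky's theorem**. -/
theorem exists_norm_le_of_ne_zero_of_ne_one (hrR : r < R) (M : ℝ) :
    ∃ K : ℝ, ∀ (f : ℂ → ℂ) (c : ℂ), DifferentiableOn ℂ f (ball c R) →
      (∀ z ∈ ball c R, f z ≠ 0) → (∀ z ∈ ball c R, f z ≠ 1) → ‖f c‖ ≤ M →
      ∀ z ∈ closedBall c r, ‖f z‖ ≤ K := by
  obtain ⟨K₁, hK₁⟩ := exists_norm_le_of_half_le_norm_center hrR M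
  obtain ⟨K₂, hK₂⟩ := exists_norm_le_of_half_le_norm_center hrR (3 / 2)
  refine ⟨max K₁ (K₂ + 1), fun f c hf h0 h1 hfM z hz ↦ ?_⟩
  obtain hfc | hfc := le_or_gt (1 / 2) ‖f c‖
  · exact (hK₁ f c hf h0 h1 hfc hfM z hz).trans (le_max_left _ _)
  · have h := hK₂ (fun y ↦ 1 - f y) c (hf.const_sub 1) (fun y hy ↦ sub_ne_zero.2 (h1 y hy).symm)
      (fun y hy ↦ by simpa using h0 y hy)
      (by linarith [norm_sub_norm_le 1 (f c), norm_one (α := ℂ)])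
      (by linarith [norm_sub_le 1 (f c), norm_one (α := ℂ)]) z hz
    refine le_max_of_le_right ?_
    linarith [norm_sub_norm_le (f z) 1, norm_sub_rev (f z) 1, norm_one (α := ℂ)]

end Schottky

section IsolatedSingularity

variable {E : Type*} [NormedAddCommGroup E] [NormedSpace ℂ E] {f : ℂ → E} {c : ℂ}

theorem meromorphicAt_of_isBoundedUnder [CompleteSpace E]
    (hf : ∀ᶠ z in 𝓝[≠] c, DifferentiableAt ℂ f z)
    (hb : (𝓝[≠] c).IsBoundedUnder (· ≤ ·) fun z ↦ ‖f z‖) : MeromorphicAt f c := by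
  have hb' : (𝓝[≠] c).IsBoundedUnder (· ≤ ·) fun z ↦ ‖f z - f c‖ := by
    obtain ⟨M, hM⟩ := hb.eventually_le
    refine isBoundedUnder_of_eventually_le (a := M + ‖f c‖) ?_
    filter_upwards [hM] with z hz
    grw [norm_sub_le, hz]
  have hlim := tendsto_limUnder_of_differentiable_on_punctured_nhds_of_bounded_under hf hb'
  rw [← MeromorphicAt.update_iff (w := c) (e := limUnder (𝓝[≠] c) f)]
  refine (analyticAt_of_differentiable_on_punctured_nhds_of_continuousAt ?_
    (continuousAt_update_same.2 hlim)).meromorphicAt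
  filter_upwards [hf, self_mem_nhdsWithin] with z hz hzc
  refine hz.congr_of_eventuallyEq ?_
  filter_upwards [isOpen_ne.mem_nhds hzc] with y hy using Function.update_of_ne hy _ _

theorem norm_le_of_forall_sphere_norm_le {r₁ r₂ M : ℝ}
    (hf : ∀ z ∈ closedBall c r₂ \ ball c r₁, DifferentiableAt ℂ f z)
    (h₁ : ∀ z ∈ sphere c r₁, ‖f z‖ ≤ M) (h₂ : ∀ z ∈ sphere c r₂, ‖f z‖ ≤ M) {z : ℂ}
    (hz : z ∈ closedBall c r₂ \ ball c r₁) : ‖f z‖ ≤ M := by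
  obtain hz₁ | hz₁ := (not_lt.1 (mt mem_ball.2 hz.2)).eq_or_lt
  · exact h₁ z hz₁.symm
  obtain hz₂ | hz₂ := (mem_closedBall.1 hz.1).eq_or_lt
  · exact h₂ z hz₂
  have hclosure : closure (ball c r₂ \ closedBall c r₁) ⊆ closedBall c r₂ \ ball c r₁ :=
    closure_minimal (sdiff_subset_sdiff ball_subset_closedBall ball_subset_closedBall)
      (isClosed_closedBall.sdiff isOpen_ball)
  refine norm_le_of_forall_mem_frontier_norm_le (isBounded_ball.subset sdiff_subset)
    (DifferentiableOn.diffContOnCl fun y hy ↦ (hf y (hclosure hy)).differentiableWithinAt)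
    (fun y hy ↦ ?_) (subset_closure ⟨hz₂, not_le.2 hz₁⟩)
  rw [(isOpen_ball.sdiff isClosed_closedBall).frontier_eq] at hy
  obtain ⟨hy₂, hy₁⟩ := hclosure hy.1
  by_cases hyr : dist y c ≤ r₁
  · exact h₁ y (hyr.antisymm (not_lt.1 hy₁))
  · exact h₂ y (eq_of_le_of_not_lt hy₂ fun h ↦ hy.2 ⟨h, hyr⟩)

theorem eventually_norm_le_of_frequently_sphere {M : ℝ}
    (hf : ∀ᶠ z in 𝓝[≠] c, DifferentiableAt ℂ f z)
    (hM : ∃ᶠ r in 𝓝[>] (0 : ℝ), ∀ z ∈ sphere c r, ‖f z‖ ≤ M) :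
    ∀ᶠ z in 𝓝[≠] c, ‖f z‖ ≤ M := by
  obtain ⟨ρ, hρ, hfρ⟩ := Metric.mem_nhdsWithin_iff.1 hf
  have hsphere {δ : ℝ} (hδ : 0 < δ) : ∃ r, 0 < r ∧ r < δ ∧ ∀ z ∈ sphere c r, ‖f z‖ ≤ M := by
    obtain ⟨r, hr, h0, hlt⟩ := (hM.and_eventually (Ioo_mem_nhdsGT hδ)).exists
    exact ⟨r, h0, hlt, hr⟩
  obtain ⟨r₂, h₂, h₂ρ, hr₂⟩ := hsphere hρ
  filter_upwards [nhdsWithin_le_nhds (ball_mem_nhds c h₂), self_mem_nhdsWithin] with z hz hzc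
  obtain ⟨r₁, h₁, h₁z, hr₁⟩ := hsphere (dist_pos.2 hzc)
  exact norm_le_of_forall_sphere_norm_le (fun y hy ↦ hfρ ⟨(mem_closedBall.1 hy.1).trans_lt h₂ρ,
    dist_pos.1 (h₁.trans_le (not_lt.1 hy.2))⟩) hr₁ hr₂ ⟨ball_subset_closedBall hz, h₁z.not_gt⟩

end IsolatedSingularity

section GreatPicard

variable {f : ℂ → ℂ} {c : ℂ}

theorem exists_forall_norm_le_on_sphere (M : ℝ) :
    ∃ K : ℝ, ∀ (f : ℂ → ℂ) (c w : ℂ) (ρ : ℝ), DifferentiableOn ℂ f (ball c ρ \ {c}) →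
      (∀ z ∈ ball c ρ \ {c}, f z ≠ 0) → (∀ z ∈ ball c ρ \ {c}, f z ≠ 1) →
      w ≠ c → ‖w - c‖ * Real.exp 4 ≤ ρ → ‖f w‖ ≤ M → ∀ z ∈ sphere c ‖w - c‖, ‖f z‖ ≤ K := by
  obtain ⟨K, hK⟩ := exists_norm_le_of_ne_zero_of_ne_one Real.pi_lt_four M
  refine ⟨K, fun f c w ρ hf h0 h1 hwc hwρ hfw z hz ↦ ?_⟩
  have hwc' : w - c ≠ 0 := sub_ne_zero.2 hwc
  -- Schottky's theorem is applied on the universal cover of the punctured disc, where every circle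
  -- around `c` lifts to a segment of length `2π`.
  set φ : ℂ → ℂ := fun ζ ↦ c + (w - c) * exp ζ with hφ
  have hmaps : MapsTo φ (ball 0 4) (ball c ρ \ {c}) := by
    refine fun ζ hζ ↦ ⟨?_, by simp [hφ, hwc']⟩
    have hre : ζ.re < 4 := (re_le_norm ζ).trans_lt (mem_ball_zero_iff.1 hζ)
    rw [mem_ball_iff_norm]
    calc ‖φ ζ - c‖ = ‖w - c‖ * Real.exp ζ.re := by simp [hφ, norm_exp]
      _ < ‖w - c‖ * Real.exp 4 := by gcongr
      _ ≤ ρ := hwρ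
  have hzexp : φ (arg ((z - c) / (w - c)) * I) = z := by
    have h := norm_mul_exp_arg_mul_I ((z - c) / (w - c))
    rw [norm_div, mem_sphere_iff_norm.1 hz, div_self (norm_ne_zero_iff.2 hwc'), ofReal_one,
      one_mul] at h
    rw [hφ]
    simp only [h]
    field_simp
    ring
  rw [← hzexp]
  refine hK (f ∘ φ) 0 (hf.comp (by fun_prop) hmaps) (fun ζ hζ ↦ h0 _ (hmaps hζ))
    (fun ζ hζ ↦ h1 _ (hmaps hζ)) (by simpa [hφ]) _ ?_
  simpa using abs_arg_le_pi _

theorem meromorphicAt_of_eventually_ne_zero_of_eventually_ne_one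
    (hf : ∀ᶠ z in 𝓝[≠] c, DifferentiableAt ℂ f z) (h0 : ∀ᶠ z in 𝓝[≠] c, f z ≠ 0)
    (h1 : ∀ᶠ z in 𝓝[≠] c, f z ≠ 1) : MeromorphicAt f c := by
  by_cases hlarge : ∀ᶠ z in 𝓝[≠] c, 1 ≤ ‖f z‖
  · rw [← MeromorphicAt.inv_iff]
    refine meromorphicAt_of_isBoundedUnder ?_ (isBoundedUnder_of_eventually_le (a := 1) ?_)
    · filter_upwards [hf, h0] with z hz hz0 using hz.inv hz0
    · filter_upwards [hlarge] with z hz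
      simpa using inv_le_one_of_one_le₀ hz
  obtain ⟨K, hK⟩ := exists_forall_norm_le_on_sphere 1
  obtain ⟨ρ, hρ, hρsub⟩ := Metric.mem_nhdsWithin_iff.1 (hf.and (h0.and h1))
  refine meromorphicAt_of_isBoundedUnder hf (isBoundedUnder_of_eventually_le
    (eventually_norm_le_of_frequently_sphere hf (M := K) ?_))
  have hdist : Tendsto (fun w ↦ ‖w - c‖) (𝓝[≠] c) (𝓝[>] 0) := tendsto_norm_sub_self_nhdsNE c
  refine hdist.frequently (((not_eventually.1 hlarge).and_eventually ((hdist.eventually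
    (Ioo_mem_nhdsGT (div_pos hρ (Real.exp_pos 4)))).and self_mem_nhdsWithin)).mono ?_)
  rintro w ⟨hw, ⟨-, hwρ⟩, hwc⟩
  exact hK f c w ρ (fun z hz ↦ (hρsub hz).1.differentiableWithinAt) (fun z hz ↦ (hρsub hz).2.1)
    (fun z hz ↦ (hρsub hz).2.2) hwc ((lt_div_iff₀ (Real.exp_pos 4)).1 hwρ).le (not_le.1 hw).le

/-- The **great Picard theorem** with moving targets. -/
theorem meromorphicAt_of_eventually_ne_of_eventually_ne {g h : ℂ → ℂ}
    (hf : ∀ᶠ z in 𝓝[≠] c, DifferentiableAt ℂ f z) (hg : MeromorphicAt g c)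
    (hh : MeromorphicAt h c) (hgh : ∃ᶠ z in 𝓝[≠] c, g z ≠ h z)
    (hfg : ∀ᶠ z in 𝓝[≠] c, f z ≠ g z) (hfh : ∀ᶠ z in 𝓝[≠] c, f z ≠ h z) :
    MeromorphicAt f c := by
  have hne : ∀ᶠ z in 𝓝[≠] c, h z - g z ≠ 0 :=
    (hh.sub hg).eventually_eq_zero_or_eventually_ne_zero.resolve_left fun h0 ↦
      hgh (h0.mono fun z hz ↦ not_not.2 (sub_eq_zero.1 hz).symm)
  have hq : MeromorphicAt (fun z ↦ (f z - g z) / (h z - g z)) c := by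
    refine meromorphicAt_of_eventually_ne_zero_of_eventually_ne_one ?_ ?_ ?_
    · filter_upwards [hf, hg.eventually_analyticAt, hh.eventually_analyticAt, hne]
        with z hfz hgz hhz hz
      exact (hfz.sub hgz.differentiableAt).div
        (hhz.differentiableAt.sub hgz.differentiableAt) hz
    · filter_upwards [hfg, hne] with z hz hz' using div_ne_zero (sub_ne_zero.2 hz) hz'
    · filter_upwards [hfh, hne] with z hz hz'
      rwa [Ne, div_eq_one_iff_eq hz', sub_left_inj]
  refine ((hq.mul (hh.sub hg)).add hg).congr ?_
  filter_upwards [hne] with z hz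
  simp [div_mul_cancel₀ _ hz]

end GreatPicard

section Entire

variable {f : ℂ → ℂ}

theorem exists_polynomial_of_isBigO_pow (hf : Differentiable ℂ f) {n : ℕ}
    (hO : f =O[Bornology.cobounded ℂ] (· ^ n)) : ∃ p : ℂ[X], ∀ z, f z = p.eval z := by
  obtain ⟨C, hC⟩ := hO.bound
  rw [← comap_norm_atTop, eventually_comap] at hC
  have hzero (k) (hk : n < k) : iteratedDeriv k f 0 = 0 := by
    have hlim : Tendsto (fun r : ℝ ↦ k.factorial * C * (r ^ n / r ^ k)) atTop (𝓝 0) := by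
      simpa using (tendsto_pow_div_pow_atTop_zero hk).const_mul (k.factorial * C)
    refine norm_le_zero_iff.1 (ge_of_tendsto hlim ?_)
    filter_upwards [eventually_gt_atTop 0, hC] with r hr hCr
    refine (norm_iteratedDeriv_le_of_forall_mem_sphere_norm_le (C := C * r ^ n) k hr
      hf.diffContOnCl fun z hz ↦ ?_).trans_eq (by ring)
    rw [mem_sphere_zero_iff_norm] at hz
    simpa [hz] using hCr z hz
  refine ⟨∑ k ∈ Finset.range (n + 1), monomial k ((k.factorial : ℂ)⁻¹ * iteratedDeriv k f 0),
    fun z ↦ ?_⟩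
  rw [← taylorSeries_eq_of_entire' 0 z hf, tsum_eq_sum (s := Finset.range (n + 1))]
  · simp [eval_finsetSum]
  · intro k hk
    simp [hzero k (by simpa using hk)]

theorem meromorphicAt_eval_inv (p : ℂ[X]) : MeromorphicAt (fun w ↦ p.eval w⁻¹) 0 := by
  simp only [eval_eq_sum_range]
  fun_prop

theorem exists_polynomial_of_meromorphicAt_comp_inv (hf : Differentiable ℂ f)
    (hmer : MeromorphicAt (fun w ↦ f w⁻¹) 0) : ∃ p : ℂ[X], ∀ z, f z = p.eval z := by
  obtain ⟨n, hn⟩ := hmer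
  refine exists_polynomial_of_isBigO_pow hf (n := n) ?_
  have hO : (fun z : ℂ ↦ z⁻¹ ^ n * f z) =O[Bornology.cobounded ℂ] fun _ ↦ (1 : ℂ) := by
    simpa [Function.comp_def, -Asymptotics.isBigO_one_iff] using
      (hn.continuousAt.tendsto.isBigO_one ℂ).comp_tendsto tendsto_inv₀_cobounded
  refine ((Asymptotics.isBigO_refl (fun z : ℂ ↦ z ^ n) _).mul hO).congr' ?_ (by simp)
  filter_upwards [Bornology.eventually_ne_cobounded 0] with z hz
  rw [inv_pow, mul_inv_cancel_left₀ (pow_ne_zero n hz)]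

end Entire

theorem fixedPoints_infinite_of_unique_preimage_general (f : ℂ → ℂ) (hf : Differentiable ℂ f)
    (htrans : ¬ ∃ p : ℂ[X], ∀ z, f z = p.eval z) (p q : ℂ[X]) (hpq : p ≠ q)
    (hp : {z | f z = p.eval z}.Finite) : {z | f z = q.eval z}.Infinite := by
  intro hq
  have hne {S : Set ℂ} (hS : S.Finite) : ∀ᶠ w in 𝓝[≠] (0 : ℂ), w⁻¹ ∉ S :=
    tendsto_inv₀_nhdsNE_zero.eventually hS.isBounded
  refine htrans (exists_polynomial_of_meromorphicAt_comp_inv hf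
    (meromorphicAt_of_eventually_ne_of_eventually_ne ?_ (meromorphicAt_eval_inv p)
      (meromorphicAt_eval_inv q) ?_ (hne hp) (hne hq)))
  · filter_upwards [self_mem_nhdsWithin] with w hw using
      (hf _).comp w (differentiableAt_inv hw)
  · have hpqfin : {z | p.eval z = q.eval z}.Finite :=
      not_infinite.1 (mt (eq_of_infinite_eval_eq p q) hpq)
    exact (hne hpqfin).frequently

/-- If `f` is a transcendental entire function with a fixed point `x` that is its own
unique preimage, then `f` has infinitely many fixed points. -/
theorem fixedPoints_infinite_of_unique_preimage (f : ℂ → ℂ)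
    (hf : Differentiable ℂ f)
    (htrans : ¬ ∃ p : Polynomial ℂ, ∀ z : ℂ, f z = p.eval z)
    (x : ℂ) (hx : f x = x) (hpre : f ⁻¹' {x} = {x}) :
    {z : ℂ | f z = z}.Infinite := by
  have hfin : {z | f z = (C x).eval z}.Finite := by
    simp only [eval_C]
    exact (finite_singleton x).subset hpre.subset
  simpa only [eval_X] using
    fixedPoints_infinite_of_unique_preimage_general f hf htrans (C x) X (X_ne_C x).symm hfin
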